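/- arXiv:2012.08873 — 2 statements merged into one kernel-verified Lean document; each statement's English description precedes it below -/
import Mathlib

section
/- Let n, m, r be integers with 0 ≤ 2r ≤ m. Suppose given subsets T_i ⊆ {1,…,n} and reals R̄_i > R̲_i > 0 for i ∈ {1,…,r}, and subsets T_j ⊆ {1,…,n} and reals R̄_j > 0 for j ∈ {2r+1,…,m}, such that (∪_{i=1}^{r} T_i) ∪ (∪_{j=2r+1}^{m} T_j) = {1,…,n}. Define g_i := ‖x(T_i)‖₂² − R̲_i and g_{i+r} := R̄_i − ‖x(T_i)‖₂² for i ∈ {1,…,r}, and g_j := R̄_j − ‖x(T_j)‖₂² for j ∈ {2r+1,…,m}. Then for every integer k ≥ 1 there exist a real ξ > 0 and diagonal matrices G_0 (indexed by ℕ^n_k) and G_1,…,G_m (indexed by ℕ^n_{k-1}), all of whose diagonal entries are ≥ 1, such that ξ = v_k^T G_0 v_k + Σ_{i=1}^m g_i · v_{k-1}^T G_i v_{k-1} holds in ℝ[x]. -/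
/-!
Every polynomial in the identity is even in each variable, so we may substitute `y_v = x_v²`. The
constraints become affine, and quadratic forms of diagonal matrices with entries at least `1` become
polynomials with coefficients at least `1`. Put `d = k - 1`. The lower annulus constraints get one
fixed multiplier, the sum of all monomials of degree at most `d`, and contribute a polynomial `P`.
All upper constraints `R_j - ∑_{v ∈ T_j} y_v` get the same multiplier
`∑_{|α| ≤ d} M ^ (d + 1 - |α|) y^α`, whose coefficients drop by the factor `M` from each degree to
the next. Each nonconstant monomial is divisible by a variable lying in some `T_j`, so for large `M`
the terms coming from `-y_v` dominate those coming from `R_j` and from `P`: all nonconstant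
coefficients of the sum of the constraint terms are at most `-1`. Subtracting this sum from a large
constant `ξ` leaves a polynomial with coefficients at least `1`, which yields `G_0`.
-/

open MvPolynomial

/-- `⌈p⌉ := ⌈deg(p)/2⌉`. -/
noncomputable def halfCeil {n : ℕ} (p : MvPolynomial (Fin n) ℝ) : ℕ :=
  (p.totalDegree + 1) / 2

/-- The finite set `ℕ^n_d` of multi-indices `α ∈ ℕ^n` with `|α| ≤ d`. -/
noncomputable def degLE (n d : ℕ) : Finset (Fin n →₀ ℕ) :=
  (Finset.Iic (Finsupp.equivFunOnFinite.symm fun _ : Fin n => d)).filter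
    fun α => (∑ i, α i) ≤ d

/-- The polynomial `v_d^T G v_d = Σ_{α,β ∈ ℕ^n_d} G_{α,β} x^{α+β}` associated with a
matrix `G` indexed by `ℕ^n_d`. -/
noncomputable def quadForm (n d : ℕ)
    (G : Matrix ↥(degLE n d) ↥(degLE n d) ℝ) : MvPolynomial (Fin n) ℝ :=
  ∑ α : ↥(degLE n d), ∑ β : ↥(degLE n d), monomial (α.1 + β.1) (G α β)

/-- The moment matrix `M_d(y)`, with entries `(M_d(y))_{α,β} = y_{α+β}`. -/
noncomputable def momentMat (n d : ℕ) (y : (Fin n →₀ ℕ) → ℝ) :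
    Matrix ↥(degLE n d) ↥(degLE n d) ℝ :=
  Matrix.of fun α β => y (α.1 + β.1)

/-- The localizing matrix `M_d(q·y)`, with entries `Σ_γ q_γ y_{α+β+γ}`. -/
noncomputable def locMat (n d : ℕ) (q : MvPolynomial (Fin n) ℝ)
    (y : (Fin n →₀ ℕ) → ℝ) : Matrix ↥(degLE n d) ↥(degLE n d) ℝ :=
  Matrix.of fun α β => ∑ γ ∈ q.support, coeff γ q * y (α.1 + β.1 + γ)

/-- A (diagonal) matrix all of whose off-diagonal entries vanish and whose diagonal entries
are all ≥ 1. -/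
def DiagGE1 {ι : Type*} (M : Matrix ι ι ℝ) : Prop :=
  (∀ a b, a ≠ b → M a b = 0) ∧ ∀ a, 1 ≤ M a a

section TotalDegree

variable {σ R : Type*} [CommRing R]

lemma totalDegree_C_sub_sum_X_le_one (c : R) (T : Finset σ) :
    (C c - ∑ v ∈ T, X v : MvPolynomial σ R).totalDegree ≤ 1 := by
  refine (totalDegree_sub _ _).trans (max_le ((totalDegree_C c).trans_le zero_le_one) ?_)
  exact totalDegree_finsetSum_le fun v _ =>
    (totalDegree_monomial_le (Finsupp.single v 1) 1).trans_eq (Finsupp.sum_single_index rfl)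

lemma totalDegree_sum_C_sub_sum_X_mul_le {ι : Type*} [Fintype ι] (c : ι → R) (T : ι → Finset σ)
    {d : ℕ} {p : MvPolynomial σ R} (hp : p.totalDegree ≤ d) :
    (∑ i, (C (c i) - ∑ v ∈ T i, X v) * p).totalDegree ≤ d + 1 := by
  refine totalDegree_finsetSum_le fun i _ => (totalDegree_mul _ _).trans ?_
  have := totalDegree_C_sub_sum_X_le_one (c i) (T i)
  omega

end TotalDegree

lemma one_le_sum_card_inter_support {σ κ : Type*} [DecidableEq σ] [Fintype κ]
    {T : κ → Finset σ} (hT : ∀ v, ∃ j, v ∈ T j) {α : σ →₀ ℕ} (hα : α ≠ 0) :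
    1 ≤ ∑ j, (T j ∩ α.support).card := by
  obtain ⟨v, hv⟩ := Finsupp.support_nonempty_iff.2 hα
  obtain ⟨j, hj⟩ := hT v
  calc 1 ≤ (T j ∩ α.support).card := Finset.card_pos.2 ⟨v, Finset.mem_inter.2 ⟨hj, hv⟩⟩
    _ ≤ ∑ j, (T j ∩ α.support).card :=
      Finset.single_le_sum (f := fun j => (T j ∩ α.support).card)
        (fun _ _ => Nat.zero_le _) (Finset.mem_univ j)

/-- The complete homogeneous symmetric polynomial of degree `d` in `M` and the variables, that is
`∑_{|α| ≤ d} M ^ (d - |α|) x^α`. It is the multiplier of the constraints, and is encoded as a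
truncated power series. -/
noncomputable def completeHomogeneous (σ : Type*) [Finite σ] {R : Type*} [CommSemiring R]
    (d : ℕ) (M : R) : MvPolynomial σ R :=
  MvPowerSeries.truncTotal (d + 1) fun α => M ^ (d - α.degree)

section CompleteHomogeneous

variable {σ R : Type*} [Finite σ]

section CommSemiring

variable [CommSemiring R] (d : ℕ) (M : R) (α : σ →₀ ℕ)

lemma coeff_completeHomogeneous :
    coeff α (completeHomogeneous σ d M) = if α.degree ≤ d then M ^ (d - α.degree) else 0 :=
  (MvPowerSeries.coeff_truncTotal_eq_ite _).trans (if_congr Nat.lt_succ_iff rfl rfl)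

variable (σ) in
lemma totalDegree_completeHomogeneous_le : (completeHomogeneous σ d M).totalDegree ≤ d :=
  Nat.lt_succ_iff.1 (MvPowerSeries.totalDegree_truncTotal_lt _ d.succ_ne_zero)

lemma coeff_add_single_completeHomogeneous_succ (v : σ) :
    coeff (α + Finsupp.single v 1) (completeHomogeneous σ (d + 1) M) =
      coeff α (completeHomogeneous σ d M) := by
  simp only [coeff_completeHomogeneous, map_add, Finsupp.degree_single, Nat.add_le_add_iff_right,
    Nat.add_sub_add_right]

lemma coeff_X_mul_completeHomogeneous [DecidableEq σ] (v : σ) :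
    coeff α (X v * completeHomogeneous σ d M) =
      if v ∈ α.support then coeff α (completeHomogeneous σ (d + 1) M) else 0 := by
  rw [coeff_X_mul']
  split_ifs with hv
  · have hle : Finsupp.single v 1 ≤ α :=
      Finsupp.single_le_iff.2 (Nat.one_le_iff_ne_zero.2 (Finsupp.mem_support_iff.1 hv))
    rw [← coeff_add_single_completeHomogeneous_succ d M _ v, tsub_add_cancel_of_le hle]
  · rfl

lemma coeff_sum_X_mul_completeHomogeneous [DecidableEq σ] (T : Finset σ) :
    coeff α ((∑ v ∈ T, X v) * completeHomogeneous σ d M) =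
      (T ∩ α.support).card * coeff α (completeHomogeneous σ (d + 1) M) := by
  simp only [Finset.sum_mul, coeff_sum, coeff_X_mul_completeHomogeneous, Finset.sum_ite_mem,
    Finset.sum_const, nsmul_eq_mul]

end CommSemiring

section Ordered

variable [CommRing R] [LinearOrder R] [IsStrictOrderedRing R] (d : ℕ) {M : R}

lemma coeff_completeHomogeneous_nonneg (hM : 0 ≤ M) (α : σ →₀ ℕ) :
    0 ≤ coeff α (completeHomogeneous σ d M) := by
  rw [coeff_completeHomogeneous]
  positivity

lemma one_le_coeff_completeHomogeneous {d : ℕ} (hM : 1 ≤ M) {α : σ →₀ ℕ} (hα : α.degree ≤ d) :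
    1 ≤ coeff α (completeHomogeneous σ d M) := by
  rw [coeff_completeHomogeneous, if_pos hα]
  exact one_le_pow₀ hM

lemma mul_coeff_completeHomogeneous_le_succ (hM : 0 ≤ M) (α : σ →₀ ℕ) :
    M * coeff α (completeHomogeneous σ d M) ≤ coeff α (completeHomogeneous σ (d + 1) M) := by
  by_cases hα : α.degree ≤ d
  · rw [coeff_completeHomogeneous, coeff_completeHomogeneous, if_pos hα, if_pos (by omega),
      ← pow_succ', Nat.sub_add_comm hα]
  · rw [coeff_completeHomogeneous d, if_neg hα, mul_zero]
    exact coeff_completeHomogeneous_nonneg _ hM α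

lemma coeff_C_sub_sum_X_mul_completeHomogeneous_le [DecidableEq σ] (hM : 0 ≤ M) (α : σ →₀ ℕ)
    (c : R) (T : Finset σ) :
    coeff α ((C c - ∑ v ∈ T, X v) * (C M * completeHomogeneous σ d M)) ≤
      (|c| - M * (T ∩ α.support).card) * coeff α (completeHomogeneous σ (d + 1) M) := by
  have hc : c * (M * coeff α (completeHomogeneous σ d M)) ≤
      |c| * coeff α (completeHomogeneous σ (d + 1) M) :=
    mul_le_mul (le_abs_self c) (mul_coeff_completeHomogeneous_le_succ d hM α)
      (mul_nonneg hM (coeff_completeHomogeneous_nonneg d hM α)) (abs_nonneg c)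
  rw [sub_mul, coeff_sub, coeff_C_mul, mul_left_comm _ (C M), coeff_C_mul, coeff_C_mul,
    coeff_sum_X_mul_completeHomogeneous, sub_mul, mul_assoc M]
  gcongr

lemma coeff_sum_C_sub_sum_X_mul_completeHomogeneous_le {κ : Type*} [Fintype κ] {T : κ → Finset σ}
    (hT : ∀ v, ∃ j, v ∈ T j) (c : κ → R) (hM : 0 ≤ M) {α : σ →₀ ℕ} (hα : α ≠ 0) :
    coeff α (∑ j, (C (c j) - ∑ v ∈ T j, X v) * (C M * completeHomogeneous σ d M)) ≤
      (∑ j, |c j| - M) * coeff α (completeHomogeneous σ (d + 1) M) := by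
  classical
  set h := coeff α (completeHomogeneous σ (d + 1) M)
  have hh : 0 ≤ h := coeff_completeHomogeneous_nonneg _ hM α
  have hcard : (1 : R) ≤ ∑ j, ((T j ∩ α.support).card : R) := by
    exact_mod_cast one_le_sum_card_inter_support hT hα
  rw [coeff_sum]
  calc ∑ j, coeff α ((C (c j) - ∑ v ∈ T j, X v) * (C M * completeHomogeneous σ d M))
      ≤ ∑ j, (|c j| - M * (T j ∩ α.support).card) * h :=
        Finset.sum_le_sum fun j _ =>
          coeff_C_sub_sum_X_mul_completeHomogeneous_le d hM α (c j) (T j)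
    _ = (∑ j, |c j| - M * ∑ j, ((T j ∩ α.support).card : R)) * h := by
        rw [← Finset.sum_mul, Finset.sum_sub_distrib, Finset.mul_sum]
    _ ≤ (∑ j, |c j| - M) * h := by
        gcongr
        exact le_mul_of_one_le_right hM hcard

end Ordered

end CompleteHomogeneous

/-- A polynomial of degree at most `d` whose coefficients up to degree `d` are all `≥ 1`. Under
`X v ↦ X v ^ 2` such polynomials become the quadratic forms `v_d^T G v_d` with `DiagGE1 G`. -/
def CoeffGE1 {σ R : Type*} [CommSemiring R] [LE R] (d : ℕ) (p : MvPolynomial σ R) : Prop :=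
  p.totalDegree ≤ d ∧ ∀ α : σ →₀ ℕ, α.degree ≤ d → 1 ≤ coeff α p

section CoeffGE1

variable {σ R : Type*} [CommRing R] [LinearOrder R] [IsStrictOrderedRing R]

lemma coeffGE1_completeHomogeneous [Finite σ] (d : ℕ) {M : R} (hM : 1 ≤ M) :
    CoeffGE1 d (completeHomogeneous σ d M) :=
  ⟨totalDegree_completeHomogeneous_le σ d M, fun _ => one_le_coeff_completeHomogeneous hM⟩

lemma CoeffGE1.C_mul {d : ℕ} {p : MvPolynomial σ R} (hp : CoeffGE1 d p) {c : R} (hc : 1 ≤ c) :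
    CoeffGE1 d (C c * p) := by
  refine ⟨?_, fun α hα => ?_⟩
  · exact (totalDegree_mul _ _).trans (by simpa using hp.1)
  · rw [coeff_C_mul]
    exact one_le_mul_of_one_le_of_one_le hc (hp.2 α hα)

lemma exists_coeffGE1_C_sub {d : ℕ} {q : MvPolynomial σ R} (hdeg : q.totalDegree ≤ d)
    (hq : ∀ α : σ →₀ ℕ, α ≠ 0 → α.degree ≤ d → coeff α q ≤ -1) :
    ∃ ξ : R, 0 < ξ ∧ CoeffGE1 d (C ξ - q) := by
  classical
  refine ⟨|coeff 0 q| + 1, by positivity, ?_, fun α hα => ?_⟩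
  · exact (totalDegree_sub _ _).trans (max_le ((totalDegree_C _).trans_le d.zero_le) hdeg)
  · rw [coeff_sub, coeff_C]
    split_ifs with h0
    · subst h0
      linarith [le_abs_self (coeff 0 q)]
    · linarith [hq α (Ne.symm h0) hα]

lemma exists_coeff_le (p : MvPolynomial σ R) : ∃ B, 0 ≤ B ∧ ∀ α, coeff α p ≤ B := by
  refine ⟨∑ α ∈ p.support, |coeff α p|, by positivity, fun α => ?_⟩
  by_cases hα : α ∈ p.support
  · exact (le_abs_self _).trans
      (Finset.single_le_sum (f := fun α => |coeff α p|) (fun _ _ => abs_nonneg _) hα)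
  · rw [notMem_support_iff.1 hα]
    positivity

theorem exists_C_eq_add_sum_C_sub_sum_X_mul [Finite σ] {κ : Type*} [Fintype κ]
    {T : κ → Finset σ} (hT : ∀ v, ∃ j, v ∈ T j) (c : κ → R) {d : ℕ} {P : MvPolynomial σ R}
    (hP : P.totalDegree ≤ d + 1) :
    ∃ ξ : R, 0 < ξ ∧ ∃ p₀ p : MvPolynomial σ R, CoeffGE1 (d + 1) p₀ ∧ CoeffGE1 d p ∧
      C ξ = p₀ + P + ∑ j, (C (c j) - ∑ v ∈ T j, X v) * p := by
  obtain ⟨B, hB, hPB⟩ := exists_coeff_le P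
  have hS : 0 ≤ ∑ j, |c j| := by positivity
  set M : R := 1 + B + ∑ j, |c j| with hM
  have hM1 : 1 ≤ M := by linarith
  set p := C M * completeHomogeneous σ d M
  have hp : CoeffGE1 d p := (coeffGE1_completeHomogeneous d hM1).C_mul hM1
  set q := P + ∑ j, (C (c j) - ∑ v ∈ T j, X v) * p with hq
  have hqdeg : q.totalDegree ≤ d + 1 :=
    (totalDegree_add _ _).trans (max_le hP (totalDegree_sum_C_sub_sum_X_mul_le c T hp.1))
  have hqcoeff : ∀ α : σ →₀ ℕ, α ≠ 0 → α.degree ≤ d + 1 → coeff α q ≤ -1 := by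
    intro α h0 hα
    set h := coeff α (completeHomogeneous σ (d + 1) M)
    have hh : 1 ≤ h := one_le_coeff_completeHomogeneous hM1 hα
    calc coeff α q ≤ B + (∑ j, |c j| - M) * h := by
          rw [hq, coeff_add]
          exact add_le_add (hPB α)
            (coeff_sum_C_sub_sum_X_mul_completeHomogeneous_le d hT c (by linarith) h0)
      _ = B - (1 + B) * h := by rw [hM]; ring
      _ ≤ -1 := by nlinarith
  obtain ⟨ξ, hξ, hp₀⟩ := exists_coeffGE1_C_sub hqdeg hqcoeff
  exact ⟨ξ, hξ, C ξ - q, p, hp₀, hp, by rw [hq]; ring⟩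

end CoeffGE1

section QuadForm

variable {n d : ℕ}

lemma mem_degLE {α : Fin n →₀ ℕ} : α ∈ degLE n d ↔ α.degree ≤ d := by
  rw [degLE, Finset.mem_filter, Finset.mem_Iic, ← Finsupp.degree_eq_sum, and_iff_right_iff_imp]
  exact fun h i => (Finsupp.le_degree i α).trans h

lemma quadForm_diagonal_coeff {p : MvPolynomial (Fin n) ℝ} (hp : p.totalDegree ≤ d) :
    quadForm n d (Matrix.diagonal fun α => coeff α.1 p) = expand 2 p := by
  have hsupp : p.support ⊆ degLE n d := fun α hα =>
    mem_degLE.2 ((le_totalDegree hα).trans hp)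
  calc quadForm n d (Matrix.diagonal fun α => coeff α.1 p)
      = ∑ α : degLE n d, monomial (2 • α.1) (coeff α.1 p) := by
        refine Finset.sum_congr rfl fun α _ => ?_
        rw [Fintype.sum_eq_single α fun β hβ => by
          rw [Matrix.diagonal_apply_ne _ hβ.symm, map_zero], Matrix.diagonal_apply_eq, two_smul]
    _ = expand 2 (∑ α ∈ degLE n d, monomial α (coeff α p)) := by
        simp only [map_sum, expand_monomial, ← Finset.sum_coe_sort (degLE n d)]
    _ = expand 2 p := by
        rw [← Finset.sum_subset hsupp fun α _ hα => by rw [notMem_support_iff.1 hα, map_zero],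
          support_sum_monomial_coeff]

lemma CoeffGE1.exists_quadForm_eq {p : MvPolynomial (Fin n) ℝ} (hp : CoeffGE1 d p) :
    ∃ G, DiagGE1 G ∧ quadForm n d G = expand 2 p := by
  refine ⟨Matrix.diagonal fun α => coeff α.1 p, ⟨fun _ _ => Matrix.diagonal_apply_ne _, ?_⟩,
    quadForm_diagonal_coeff hp.1⟩
  intro α
  rw [Matrix.diagonal_apply_eq]
  exact hp.2 α (mem_degLE.1 α.2)

end QuadForm

theorem stmt6_general {n : ℕ} {ι κ : Type*} [Fintype ι] [Fintype κ]
    (T : ι → Finset (Fin n)) (Rlo Rhi : ι → ℝ) (T' : κ → Finset (Fin n)) (Rb : κ → ℝ)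
    (hcov : Finset.univ.biUnion T ∪ Finset.univ.biUnion T' = Finset.univ) (d : ℕ) :
    ∃ ξ : ℝ, 0 < ξ ∧
      ∃ G0, DiagGE1 G0 ∧
      ∃ Glo : ι → Matrix (degLE n d) (degLE n d) ℝ, (∀ i, DiagGE1 (Glo i)) ∧
      ∃ Ghi : ι → Matrix (degLE n d) (degLE n d) ℝ, (∀ i, DiagGE1 (Ghi i)) ∧
      ∃ Gb : κ → Matrix (degLE n d) (degLE n d) ℝ, (∀ j, DiagGE1 (Gb j)) ∧
        (C ξ : MvPolynomial (Fin n) ℝ)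
          = quadForm n (d + 1) G0
            + (∑ i, ((∑ v ∈ T i, X v ^ 2) - C (Rlo i)) * quadForm n d (Glo i))
            + (∑ i, (C (Rhi i) - ∑ v ∈ T i, X v ^ 2) * quadForm n d (Ghi i))
            + ∑ j, (C (Rb j) - ∑ v ∈ T' j, X v ^ 2) * quadForm n d (Gb j) := by
  have hcov' : ∀ v, ∃ j, v ∈ Sum.elim T T' j := fun v => by
    simpa using Finset.ext_iff.1 hcov v
  have hlo := coeffGE1_completeHomogeneous (σ := Fin n) d (le_refl (1 : ℝ))
  set pl := completeHomogeneous (Fin n) d (1 : ℝ)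
  obtain ⟨ξ, hξ, p₀, p, hp₀, hp, hsum⟩ :=
    exists_C_eq_add_sum_C_sub_sum_X_mul hcov' (Sum.elim Rhi Rb)
      (P := -∑ i, (C (Rlo i) - ∑ v ∈ T i, X v) * pl)
      ((totalDegree_neg _).trans_le (totalDegree_sum_C_sub_sum_X_mul_le Rlo T hlo.1))
  obtain ⟨G₀, hG₀, hG₀p⟩ := hp₀.exists_quadForm_eq
  obtain ⟨L, hL, hLp⟩ := hlo.exists_quadForm_eq
  obtain ⟨G, hG, hGp⟩ := hp.exists_quadForm_eq
  refine ⟨ξ, hξ, G₀, hG₀, fun _ => L, fun _ => hL, fun _ => G, fun _ => hG, fun _ => G,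
    fun _ => hG, ?_⟩
  have hexpand := congrArg (expand 2) hsum
  simp only [← Finset.sum_neg_distrib, ← neg_mul, neg_sub, Fintype.sum_sum_type, Sum.elim_inl,
    Sum.elim_inr, map_add, map_sum, map_mul, map_sub, expand_C, expand_X] at hexpand
  simp only [hG₀p, hLp, hGp]
  rw [hexpand, add_assoc _ (∑ i, _) (∑ j, _)]

/-- POPs with ball or annulus constraints on subsets of variables: with
`r` annulus constraints `g_i = ‖x(T_i)‖₂² − R̲_i`, `g_{i+r} = R̄_i − ‖x(T_i)‖₂²` (`i ∈ [r]`)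
and `m − 2r` ball constraints `g_j = R̄_j − ‖x(T_j)‖₂²`, whose index sets cover `{1,…,n}`,
for every `k ≥ 1` there exist `ξ > 0` and diagonal matrices `G_0` (indexed by `ℕ^n_k`) and
`G_1,…,G_m` (indexed by `ℕ^n_{k-1}`), all with diagonal entries ≥ 1, such that
`ξ = v_k^T G_0 v_k + Σ_{i=1}^m g_i · v_{k-1}^T G_i v_{k-1}`. -/
theorem stmt6 (n m r : ℕ) (hrm : 2 * r ≤ m)
    (T : Fin r → Finset (Fin n)) (Rlo Rhi : Fin r → ℝ)
    (hR : ∀ i, 0 < Rlo i ∧ Rlo i < Rhi i)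
    (T' : Fin (m - 2 * r) → Finset (Fin n)) (Rb : Fin (m - 2 * r) → ℝ)
    (hRb : ∀ j, 0 < Rb j)
    (hcov : (Finset.univ.biUnion T) ∪ (Finset.univ.biUnion T') = (Finset.univ : Finset (Fin n))) :
    ∀ k : ℕ, 1 ≤ k →
      ∃ ξ : ℝ, 0 < ξ ∧
      ∃ G0 : Matrix ↥(degLE n k) ↥(degLE n k) ℝ, DiagGE1 G0 ∧
      ∃ Glo : Fin r → Matrix ↥(degLE n (k - 1)) ↥(degLE n (k - 1)) ℝ,
        (∀ i, DiagGE1 (Glo i)) ∧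
      ∃ Ghi : Fin r → Matrix ↥(degLE n (k - 1)) ↥(degLE n (k - 1)) ℝ,
        (∀ i, DiagGE1 (Ghi i)) ∧
      ∃ Gb : Fin (m - 2 * r) → Matrix ↥(degLE n (k - 1)) ↥(degLE n (k - 1)) ℝ,
        (∀ j, DiagGE1 (Gb j)) ∧
        (C ξ : MvPolynomial (Fin n) ℝ)
          = quadForm n k G0
            + (∑ i, ((∑ v ∈ T i, X v ^ 2) - C (Rlo i)) * quadForm n (k - 1) (Glo i))
            + (∑ i, (C (Rhi i) - ∑ v ∈ T i, X v ^ 2) * quadForm n (k - 1) (Ghi i))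
            + ∑ j, (C (Rb j) - ∑ v ∈ T' j, X v ^ 2) * quadForm n (k - 1) (Gb j) := by
  intro k hk
  obtain ⟨d, rfl⟩ := Nat.exists_eq_add_of_le' hk
  exact stmt6_general T Rlo Rhi T' Rb hcov d
end

section
/- Let I ⊆ {1,…,n} and let J be a finite index set. Suppose J is partitioned into index sets corresponding to annulus pairs and balls as follows: there are subsets T_q ⊆ I with reals R̄_q > R̲_q > 0 for q in a set A ⊆ J, paired indices q' for q ∈ A, and subsets T_q ⊆ I with reals R̄_q > 0 for q in a set B ⊆ J, with g_q := ‖x(T_q)‖₂² − R̲_q and g_{q'} := R̄_q − ‖x(T_q)‖₂² for q ∈ A, and g_q := R̄_q − ‖x(T_q)‖₂² for q ∈ B, and (∪_{q∈A} T_q) ∪ (∪_{q∈B} T_q) = I. Then for every integer k ≥ 1 there exist a real ξ > 0 and diagonal matrices G_0 (indexed by ℕ^I_k) and G_i (indexed by ℕ^I_{k-1}), i ∈ J, all of whose diagonal entries are ≥ 1, such that ξ = (v_k^I)^T G_0 v_k^I + Σ_{i∈J} g_i · (v_{k-1}^I)^T G_i v_{k-1}^I holds in ℝ[x]. -/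
open MvPolynomial

/-- The finite set `ℕ^I_d` of multi-indices `α` with `|α| ≤ d` supported on `I`. -/
noncomputable def degLEI (n : ℕ) (I : Finset (Fin n)) (d : ℕ) : Finset (Fin n →₀ ℕ) :=
  (degLE n d).filter fun α => α.support ⊆ I

/-- The polynomial `(v_d^I)^T G v_d^I = Σ_{α,β ∈ ℕ^I_d} G_{α,β} x^{α+β}`. -/
noncomputable def quadFormI (n : ℕ) (I : Finset (Fin n)) (d : ℕ)
    (G : Matrix ↥(degLEI n I d) ↥(degLEI n I d) ℝ) : MvPolynomial (Fin n) ℝ :=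
  ∑ α : ↥(degLEI n I d), ∑ β : ↥(degLEI n I d), monomial (α.1 + β.1) (G α β)

/-!
Every constraint gets a positive multiple of one common diagonal matrix `W`: counting the outer ball
of each annulus twice, the constraints sum to `S - ∑ v ∈ I, m v * X v ^ 2` with `1 ≤ m v` on `I`, as
the `T q` cover `I`. Multiplication by `m v * X v ^ 2` moves the weight of `W` at `α` to the
monomial of `α + single v 1`, so all nonconstant coefficients of
`ξ - (S - ∑ v ∈ I, m v * X v ^ 2) * ∑ α, W α * x ^ (2 * α)` are at least `1` as soon as the weight
in degree `j` is `|S|` times the weight in degree `j + 1`, plus `1`; the constant coefficient is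
repaired by taking `ξ` large.
-/

section DiagGE1

variable {κ : Type*}

lemma diagGE1_diagonal_iff [DecidableEq κ] {f : κ → ℝ} :
    DiagGE1 (Matrix.diagonal f) ↔ ∀ a, 1 ≤ f a := by
  simp +contextual [DiagGE1]

lemma DiagGE1.smul {M : Matrix κ κ ℝ} (hM : DiagGE1 M) {r : ℝ} (hr : 1 ≤ r) :
    DiagGE1 (r • M) :=
  ⟨fun a b hab => by simp [hM.1 a b hab], fun a => one_le_mul_of_one_le_of_one_le hr (hM.2 a)⟩

end DiagGE1

section DiagForm

variable {n : ℕ} {I : Finset (Fin n)} {d : ℕ}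

lemma mem_degLEI {α : Fin n →₀ ℕ} : α ∈ degLEI n I d ↔ α.degree ≤ d ∧ α.support ⊆ I := by
  have le_of_degree_le : α.degree ≤ d → ∀ i, α i ≤ d := fun h i => (α.le_degree i).trans h
  simp only [degLEI, degLE, Finset.mem_filter, Finset.mem_Iic, ← Finsupp.degree_eq_sum,
    Finsupp.le_def, Finsupp.equivFunOnFinite_symm_apply_apply]
  tauto

lemma quadFormI_smul (r : ℝ) (G : Matrix ↥(degLEI n I d) ↥(degLEI n I d) ℝ) :
    quadFormI n I d (r • G) = r • quadFormI n I d G := by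
  simp only [quadFormI, Finset.smul_sum, smul_monomial, Matrix.smul_apply]

/-- The polynomial `Σ_{α ∈ ℕ^I_d} f(α) x^{2α}`, which is `(v_d^I)^T G v_d^I` for the diagonal matrix
`G` with entries `f`. The weight `f` is defined on all multi-indices so that forms of different
degrees `d` can be compared. -/
noncomputable def diagForm (I : Finset (Fin n)) (d : ℕ) (f : (Fin n →₀ ℕ) → ℝ) :
    MvPolynomial (Fin n) ℝ :=
  ∑ α ∈ degLEI n I d, monomial (α + α) (f α)

lemma quadFormI_diagonal (f : (Fin n →₀ ℕ) → ℝ) :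
    quadFormI n I d (Matrix.diagonal fun α => f α) = diagForm I d f := by
  rw [diagForm, ← Finset.sum_coe_sort]
  refine Finset.sum_congr rfl fun α _ => ?_
  rw [Finset.sum_eq_single α (fun β _ hβ => ?_) (by simp), Matrix.diagonal_apply_eq]
  rw [Matrix.diagonal_apply_ne _ hβ.symm, monomial_zero]

lemma diagForm_succ_of_eq_zero {f : (Fin n →₀ ℕ) → ℝ} (hf : ∀ α, α.degree = d + 1 → f α = 0) :
    diagForm I (d + 1) f = diagForm I d f := by
  symm
  refine Finset.sum_subset (fun α hα => ?_) fun α hα hα' => ?_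
  · rw [mem_degLEI] at hα ⊢
    exact ⟨hα.1.trans d.le_succ, hα.2⟩
  · rw [mem_degLEI] at hα hα'
    rw [hf α (by grind), monomial_zero]

lemma C_eq_diagForm (ξ : ℝ) : C ξ = diagForm I d fun α => if α = 0 then ξ else 0 := by
  rw [diagForm, Finset.sum_eq_single 0 (fun α _ hα => by simp [hα])
    (fun h => absurd (mem_degLEI.2 (by simp)) h)]
  simp

lemma X_sq_mul_diagForm {v : Fin n} (hv : v ∈ I) (f : (Fin n →₀ ℕ) → ℝ) :
    X v ^ 2 * diagForm I d f =
      diagForm I (d + 1) fun α => if v ∈ α.support then f (α - Finsupp.single v 1) else 0 := by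
  simp only [diagForm, apply_ite (monomial _), map_zero, Finset.mul_sum]
  rw [← Finset.sum_filter]
  have sub_add_single : ∀ α : Fin n →₀ ℕ, v ∈ α.support →
      α - Finsupp.single v 1 + Finsupp.single v 1 = α := fun α hα =>
    Finsupp.sub_add_single_one_cancel (Finsupp.mem_support_iff.1 hα)
  refine Finset.sum_nbij' (· + Finsupp.single v 1) (· - Finsupp.single v 1)
    (fun α hα => ?_) (fun α hα => ?_) (fun α _ => add_tsub_cancel_right _ _)
    (fun α hα => sub_add_single α (Finset.mem_filter.1 hα).2) (fun α _ => ?_)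
  · rw [mem_degLEI] at hα
    rw [Finset.mem_filter, mem_degLEI, map_add, Finsupp.degree_single]
    refine ⟨⟨Nat.add_le_add_right hα.1 1, Finsupp.support_add.trans ?_⟩, by simp⟩
    exact Finset.union_subset hα.2
      (Finsupp.support_single_subset.trans (Finset.singleton_subset_iff.2 hv))
  · obtain ⟨hαI, hvα⟩ := Finset.mem_filter.1 hα
    rw [mem_degLEI, ← sub_add_single α hvα, map_add, Finsupp.degree_single] at hαI
    rw [mem_degLEI]
    exact ⟨Nat.le_of_add_le_add_right hαI.1,
      (Finsupp.support_mono le_self_add).trans hαI.2⟩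
  · rw [add_tsub_cancel_right, X_pow_eq_monomial, monomial_mul, one_mul,
      ← one_add_one_eq_two, Finsupp.single_add, add_add_add_comm, add_comm (Finsupp.single v 1)]

/-- The coefficient of `x^{2α}` in `ξ - (S - Σ_v m_v x_v²) Σ_α f(α) x^{2α}`. -/
noncomputable def slackCoeff (ξ S : ℝ) (m : Fin n → ℝ) (f : (Fin n →₀ ℕ) → ℝ)
    (α : Fin n →₀ ℕ) : ℝ :=
  (if α = 0 then ξ else 0) - S * f α + ∑ v ∈ α.support, m v * f (α - Finsupp.single v 1)

lemma C_eq_diagForm_slackCoeff_add (ξ S : ℝ) (m : Fin n → ℝ) {f : (Fin n →₀ ℕ) → ℝ}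
    (hf : ∀ α, α.degree = d + 1 → f α = 0) :
    C ξ = diagForm I (d + 1) (slackCoeff ξ S m f) +
      (C S - ∑ v ∈ I, m v • X v ^ 2) * diagForm I d f := by
  have shifted : (∑ v ∈ I, m v • X v ^ 2) * diagForm I d f =
      diagForm I (d + 1) fun α => ∑ v ∈ α.support, m v * f (α - Finsupp.single v 1) := by
    rw [Finset.sum_mul, Finset.sum_congr rfl fun v hv => by
      rw [smul_mul_assoc, X_sq_mul_diagForm hv]]
    simp only [diagForm, Finset.smul_sum, smul_monomial, map_sum]
    rw [Finset.sum_comm]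
    refine Finset.sum_congr rfl fun α hα => ?_
    simp only [smul_eq_mul, mul_ite, mul_zero, apply_ite (monomial _), map_zero]
    rw [Finset.sum_ite_mem, Finset.inter_eq_right.2 (mem_degLEI.1 hα).2]
  rw [sub_mul, shifted, ← diagForm_succ_of_eq_zero hf, C_eq_diagForm (I := I) (d := d + 1) ξ]
  simp only [diagForm, slackCoeff, Finset.mul_sum, C_mul_monomial, map_add, map_sub,
    Finset.sum_add_distrib, Finset.sum_sub_distrib]
  ring

end DiagForm

section GeomWeight

variable {n : ℕ} {d : ℕ} {r : ℝ} {α : Fin n →₀ ℕ}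

/-- The radial weight `1 + r + ⋯ + r^{d-|α|}`, chosen to satisfy
`geomWeight r d (α - e_v) = r * geomWeight r d α + 1`. It vanishes for `|α| > d`. -/
noncomputable def geomWeight (r : ℝ) (d : ℕ) (α : Fin n →₀ ℕ) : ℝ :=
  ∑ i ∈ Finset.range (d + 1 - α.degree), r ^ i

lemma geomWeight_eq_zero (hα : d < α.degree) : geomWeight r d α = 0 := by
  rw [geomWeight, Nat.sub_eq_zero_of_le hα, Finset.sum_range_zero]

lemma geomWeight_nonneg (hr : 0 ≤ r) : 0 ≤ geomWeight r d α :=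
  Finset.sum_nonneg fun i _ => pow_nonneg hr i

lemma one_le_geomWeight (hr : 0 ≤ r) (hα : α.degree ≤ d) : 1 ≤ geomWeight r d α := by
  rw [geomWeight, Nat.succ_sub hα, geom_sum_succ]
  exact le_add_of_nonneg_left (mul_nonneg hr (Finset.sum_nonneg fun i _ => pow_nonneg hr i))

lemma geomWeight_sub_single {v : Fin n} (hv : v ∈ α.support) (hα : α.degree ≤ d + 1) :
    geomWeight r d (α - Finsupp.single v 1) = r * geomWeight r d α + 1 := by
  have hdeg : (α - Finsupp.single v 1).degree + 1 = α.degree := by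
    conv_rhs => rw [← Finsupp.sub_add_single_one_cancel (Finsupp.mem_support_iff.1 hv), map_add,
      Finsupp.degree_single]
  have hexp : d + 1 - (α - Finsupp.single v 1).degree = d + 1 - α.degree + 1 := by omega
  rw [geomWeight, hexp, geom_sum_succ, geomWeight]

lemma one_le_slackCoeff_geomWeight {S : ℝ} {m : Fin n → ℝ} (hm : ∀ v ∈ α.support, 1 ≤ m v)
    (hα : α.degree ≤ d + 1) :
    1 ≤ slackCoeff (|S| * geomWeight |S| d (0 : Fin n →₀ ℕ) + 1) S m (geomWeight |S| d) α := by
  have hS : S * geomWeight |S| d α ≤ |S| * geomWeight |S| d α :=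
    mul_le_mul_of_nonneg_right (le_abs_self S) (geomWeight_nonneg (abs_nonneg S))
  rcases eq_or_ne α 0 with rfl | h0
  · simp only [slackCoeff, if_true, Finsupp.support_zero, Finset.sum_empty]
    linarith
  · obtain ⟨v, hv⟩ := Finsupp.support_nonempty_iff.2 h0
    have hsum : |S| * geomWeight |S| d α + 1 ≤
        ∑ u ∈ α.support, m u * geomWeight |S| d (α - Finsupp.single u 1) := calc
      _ = geomWeight |S| d (α - Finsupp.single v 1) := (geomWeight_sub_single hv hα).symm
      _ ≤ m v * geomWeight |S| d (α - Finsupp.single v 1) :=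
        le_mul_of_one_le_left (geomWeight_nonneg (abs_nonneg S)) (hm v hv)
      _ ≤ _ := Finset.single_le_sum (f := fun u => m u * geomWeight |S| d (α - Finsupp.single u 1))
        (fun u hu => mul_nonneg (zero_le_one.trans (hm u hu)) (geomWeight_nonneg (abs_nonneg S))) hv
    rw [slackCoeff, if_neg h0]
    linarith

end GeomWeight

theorem exists_diagGE1_certificate_of_sum_eq {n : ℕ} {ι : Type*} {I : Finset (Fin n)}
    {J : Finset ι} {g : ι → MvPolynomial (Fin n) ℝ} {c : ι → ℝ} {S : ℝ} {m : Fin n → ℝ}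
    (hc : ∀ i ∈ J, 1 ≤ c i) (hm : ∀ v ∈ I, 1 ≤ m v)
    (hg : ∑ i ∈ J, c i • g i = C S - ∑ v ∈ I, m v • X v ^ 2) (d : ℕ) :
    ∃ ξ : ℝ, 0 < ξ ∧
      ∃ G0 : Matrix ↥(degLEI n I (d + 1)) ↥(degLEI n I (d + 1)) ℝ, DiagGE1 G0 ∧
      ∃ G : ι → Matrix ↥(degLEI n I d) ↥(degLEI n I d) ℝ,
        (∀ i ∈ J, DiagGE1 (G i)) ∧
        (C ξ : MvPolynomial (Fin n) ℝ)
          = quadFormI n I (d + 1) G0 + ∑ i ∈ J, g i * quadFormI n I d (G i) := by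
  set w : (Fin n →₀ ℕ) → ℝ := geomWeight |S| d
  set ξ : ℝ := |S| * w 0 + 1
  have hW : DiagGE1 (Matrix.diagonal fun α : ↥(degLEI n I d) => w α) :=
    diagGE1_diagonal_iff.2 fun α => one_le_geomWeight (abs_nonneg S) (mem_degLEI.1 α.2).1
  have hG0 : DiagGE1 (Matrix.diagonal fun α : ↥(degLEI n I (d + 1)) => slackCoeff ξ S m w α) :=
    diagGE1_diagonal_iff.2 fun α => one_le_slackCoeff_geomWeight
      (fun v hv => hm v ((mem_degLEI.1 α.2).2 hv)) (mem_degLEI.1 α.2).1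
  have hξ : 0 < ξ :=
    add_pos_of_nonneg_of_pos (mul_nonneg (abs_nonneg S) (geomWeight_nonneg (abs_nonneg S))) one_pos
  refine ⟨ξ, hξ, _, hG0, fun i => c i • Matrix.diagonal fun α : ↥(degLEI n I d) => w α,
    fun i hi => hW.smul (hc i hi), ?_⟩
  simp only [quadFormI_smul, quadFormI_diagonal, mul_smul_comm, ← smul_mul_assoc]
  rw [← Finset.sum_mul, hg]
  exact C_eq_diagForm_slackCoeff_add ξ S m fun α hα => geomWeight_eq_zero hα.ge

section Covering

variable {ι σ : Type*} [DecidableEq σ] {s : Finset ι} {T : ι → Finset σ}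

lemma card_filter_mem_pos_iff {v : σ} :
    0 < (s.filter fun q => v ∈ T q).card ↔ v ∈ s.biUnion T := by
  rw [Finset.card_pos, Finset.filter_nonempty_iff, Finset.mem_biUnion]

lemma sum_sum_eq_sum_card_smul {M : Type*} [AddCommMonoid M] {I : Finset σ}
    (hT : s.biUnion T ⊆ I) (f : σ → M) :
    ∑ q ∈ s, ∑ v ∈ T q, f v = ∑ v ∈ I, (s.filter fun q => v ∈ T q).card • f v := by
  simp only [← Finset.sum_const]
  refine Finset.sum_comm' fun q v => ?_
  have := @hT v
  grind

lemma sum_annuli_add_sum_balls {R : Type*} [CommRing R] {A B : Finset ι} {pair : ι → ι}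
    {I : Finset σ} {Rlo Rhi : ι → R} {g : ι → MvPolynomial σ R}
    (hA : ∀ q ∈ A, g q = (∑ v ∈ T q, X v ^ 2) - C (Rlo q) ∧
      g (pair q) = C (Rhi q) - ∑ v ∈ T q, X v ^ 2)
    (hB : ∀ q ∈ B, g q = C (Rhi q) - ∑ v ∈ T q, X v ^ 2)
    (hTA : A.biUnion T ⊆ I) (hTB : B.biUnion T ⊆ I) :
    ∑ q ∈ A, (g q + 2 • g (pair q)) + ∑ q ∈ B, g q =
      C (∑ q ∈ A, (2 * Rhi q - Rlo q) + ∑ q ∈ B, Rhi q) -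
        ∑ v ∈ I, ((A.filter fun q => v ∈ T q).card + (B.filter fun q => v ∈ T q).card) •
          X v ^ 2 := by
  have annulus : ∀ q ∈ A, g q + 2 • g (pair q) = C (2 * Rhi q - Rlo q) - ∑ v ∈ T q, X v ^ 2 := by
    intro q hq
    rw [(hA q hq).1, (hA q hq).2, map_sub, two_mul, map_add]
    ring
  rw [Finset.sum_congr rfl annulus, Finset.sum_congr rfl hB]
  simp only [add_smul, Finset.sum_add_distrib]
  rw [← sum_sum_eq_sum_card_smul hTA, ← sum_sum_eq_sum_card_smul hTB, Finset.sum_sub_distrib,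
    Finset.sum_sub_distrib, map_add, map_sum, map_sum]
  ring

end Covering

section ConstraintMult

variable {ι : Type*} [DecidableEq ι] {A B : Finset ι} {pair : ι → ι}

/-- How often the constraint `i` occurs when each annulus `q ∈ A` contributes its inner constraint
`q` once and its outer constraint `pair q` twice, and each ball `q ∈ B` contributes `q` once. -/
def constraintMult (A B : Finset ι) (pair : ι → ι) (i : ι) : ℕ :=
  (if i ∈ A then 1 else 0) + 2 * (A.filter fun q => pair q = i).card + if i ∈ B then 1 else 0

lemma one_le_constraintMult {i : ι} (hi : i ∈ A ∪ A.image pair ∪ B) :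
    1 ≤ constraintMult A B pair i := by
  rw [Finset.mem_union, Finset.mem_union, Finset.mem_image] at hi
  rw [constraintMult]
  rcases hi with (hiA | ⟨q, hq, rfl⟩) | hiB
  · rw [if_pos hiA]
    omega
  · have : 0 < (A.filter fun p => pair p = pair q).card :=
      Finset.card_pos.2 ⟨q, Finset.mem_filter.2 ⟨hq, rfl⟩⟩
    omega
  · rw [if_pos hiB]
    omega

lemma sum_constraintMult_smul {M : Type*} [AddCommMonoid M] (f : ι → M) :
    ∑ i ∈ A ∪ A.image pair ∪ B, constraintMult A B pair i • f i =
      ∑ q ∈ A, (f q + 2 • f (pair q)) + ∑ q ∈ B, f q := by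
  set J := A ∪ A.image pair ∪ B
  have sum_ite : ∀ s ⊆ J, ∑ i ∈ J, (if i ∈ s then 1 else 0 : ℕ) • f i = ∑ i ∈ s, f i := by
    intro s hs
    simp only [ite_smul, one_smul, zero_smul]
    rw [Finset.sum_ite_mem, Finset.inter_eq_right.2 hs]
  have sum_fiber : ∑ i ∈ J, (A.filter fun q => pair q = i).card • f i = ∑ q ∈ A, f (pair q) := by
    have hpair : ∀ q ∈ A, pair q ∈ J := by grind
    simp only [← Finset.sum_const]
    exact Finset.sum_fiberwise_of_maps_to' hpair f
  simp only [constraintMult, add_smul, mul_smul, Finset.sum_add_distrib]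
  rw [sum_ite A (by grind), sum_ite B (by grind), ← Finset.smul_sum, sum_fiber, Finset.smul_sum]

end ConstraintMult

theorem stmt13_general {n : ℕ} {ι : Type*} [DecidableEq ι] {I : Finset (Fin n)}
    {J A B : Finset ι} {pair : ι → ι} {T : ι → Finset (Fin n)} {Rlo Rhi : ι → ℝ}
    {g : ι → MvPolynomial (Fin n) ℝ}
    (hpart : J = A ∪ A.image pair ∪ B)
    (hA : ∀ q ∈ A, g q = (∑ v ∈ T q, X v ^ 2) - C (Rlo q) ∧
      g (pair q) = C (Rhi q) - ∑ v ∈ T q, X v ^ 2)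
    (hB : ∀ q ∈ B, g q = C (Rhi q) - ∑ v ∈ T q, X v ^ 2)
    (hcov : (A.biUnion T) ∪ (B.biUnion T) = I) :
    ∀ k : ℕ, 1 ≤ k →
      ∃ ξ : ℝ, 0 < ξ ∧
      ∃ G0 : Matrix ↥(degLEI n I k) ↥(degLEI n I k) ℝ, DiagGE1 G0 ∧
      ∃ G : ι → Matrix ↥(degLEI n I (k - 1)) ↥(degLEI n I (k - 1)) ℝ,
        (∀ i ∈ J, DiagGE1 (G i)) ∧
        (C ξ : MvPolynomial (Fin n) ℝ)
          = quadFormI n I k G0 + ∑ i ∈ J, g i * quadFormI n I (k - 1) (G i) := by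
  intro k hk
  obtain ⟨d, rfl⟩ := Nat.exists_eq_add_of_le' hk
  subst hpart
  have covered : ∀ v ∈ I,
      1 ≤ (A.filter fun q => v ∈ T q).card + (B.filter fun q => v ∈ T q).card := by
    intro v hv
    rw [← hcov, Finset.mem_union, ← card_filter_mem_pos_iff, ← card_filter_mem_pos_iff] at hv
    omega
  have combined := (sum_constraintMult_smul g).trans <| sum_annuli_add_sum_balls hA hB
    (hcov ▸ Finset.subset_union_left) (hcov ▸ Finset.subset_union_right)
  simp only [← Nat.cast_smul_eq_nsmul ℝ] at combined
  exact exists_diagGE1_certificate_of_sum_eq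
    (fun i hi => Nat.one_le_cast.2 (one_le_constraintMult hi))
    (fun v hv => Nat.one_le_cast.2 (covered v hv)) combined d

/-- Clique version of Statement 6: the index set `J` is partitioned into
annulus pairs (`q ∈ A`, paired with `pair q`) and balls (`q ∈ B`), with
`g_q = ‖x(T_q)‖₂² − R̲_q`, `g_{pair q} = R̄_q − ‖x(T_q)‖₂²` for `q ∈ A` and
`g_q = R̄_q − ‖x(T_q)‖₂²` for `q ∈ B`, the sets `T_q ⊆ I` covering `I`.  Then for every
`k ≥ 1` there exist `ξ > 0` and diagonal matrices `G_0` (indexed by `ℕ^I_k`) and `G_i`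
(indexed by `ℕ^I_{k-1}`, `i ∈ J`), all with diagonal entries ≥ 1, such that
`ξ = (v_k^I)^T G_0 v_k^I + Σ_{i∈J} g_i (v_{k-1}^I)^T G_i v_{k-1}^I`. -/
theorem stmt13 (n : ℕ) {ι : Type} [DecidableEq ι] (I : Finset (Fin n))
    (J A B : Finset ι) (pair : ι → ι)
    (T : ι → Finset (Fin n)) (Rlo Rhi : ι → ℝ)
    (g : ι → MvPolynomial (Fin n) ℝ)
    (hpart : J = A ∪ A.image pair ∪ B)
    (hdisj1 : Disjoint A (A.image pair))
    (hdisj2 : Disjoint (A ∪ A.image pair) B)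
    (hinj : Set.InjOn pair ↑A)
    (hA : ∀ q ∈ A, T q ⊆ I ∧ 0 < Rlo q ∧ Rlo q < Rhi q ∧
      g q = (∑ v ∈ T q, X v ^ 2) - C (Rlo q) ∧
      g (pair q) = C (Rhi q) - ∑ v ∈ T q, X v ^ 2)
    (hB : ∀ q ∈ B, T q ⊆ I ∧ 0 < Rhi q ∧ g q = C (Rhi q) - ∑ v ∈ T q, X v ^ 2)
    (hcov : (A.biUnion T) ∪ (B.biUnion T) = I) :
    ∀ k : ℕ, 1 ≤ k →
      ∃ ξ : ℝ, 0 < ξ ∧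
      ∃ G0 : Matrix ↥(degLEI n I k) ↥(degLEI n I k) ℝ, DiagGE1 G0 ∧
      ∃ G : ι → Matrix ↥(degLEI n I (k - 1)) ↥(degLEI n I (k - 1)) ℝ,
        (∀ i ∈ J, DiagGE1 (G i)) ∧
        (C ξ : MvPolynomial (Fin n) ℝ)
          = quadFormI n I k G0 + ∑ i ∈ J, g i * quadFormI n I (k - 1) (G i) :=
  stmt13_general hpart (fun q hq => (hA q hq).2.2.2) (fun q hq => (hB q hq).2.2) hcov
end
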